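/- Let f: Z_1 → Z_2 be a morphism between two strongly boundary reduced tiled surfaces and let Y be a sub-tiled-surface of Z_1. Then f(SBR(Y↪Z_1)) ⊆ SBR(f(Y)↪Z_2). -/

import Mathlib

/-!
Formalization preamble for "Core Surfaces" (Magee–Puder).

We work with a fixed combinatorial (CW) model.  The surface `Σ_g` has one vertex,
`2g` directed labeled edges (the label `2i` plays the role of `a_{i+1}` and `2i+1`
the role of `b_{i+1}`), and one `4g`-gon glued along `[a₁,b₁]⋯[a_g,b_g]`.

* `Gamma g` is the surface group, presented by the single relator.
* A `Complex g` is a combinatorial 2-complex with directed, labeled edges and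
  2-cells given by their boundary walks; coverings of `Σ_g` are the complexes in
  which every vertex has exactly one incoming/outgoing edge of each label, every
  walk reading the relator is closed, and every closed walk reading the relator
  bounds exactly one face (`IsCovering`).  A tiled surface is a complex that
  embeds into such a covering (`IsTiledSurface`).
* Blocks, chains, boundary cycles (via the ribbon structure coming from the fixed
  cyclic order of the `4g` half-edges around a vertex of `Σ_g`), boundary-reduced
  and strongly boundary-reduced surfaces are defined combinatorially.
* Homotopy of edge-walks is the edge-path-group homotopy: backtrack insertions and
  insertions of boundaries of (present) faces.
* `cover g J` is the covering space `J\~Σ_g` of `Σ_g` associated to a subgroup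
  `J ≤ Γ_g` (vertices = right cosets), and `coreSub g J` is the core surface of
  `J`, defined exactly as in the paper: the union of all shortest representative
  cycles of essential free-homotopy classes, together with all components of the
  complement containing finitely many `4g`-gons.
-/

noncomputable section

namespace CS

/-- Signed letters over the generators `a₁,b₁,…,a_g,b_g` of `Γ_g`
(`a_{i+1} ↦ 2i`, `b_{i+1} ↦ 2i+1`); `true` means a positive letter. -/
abbrev Letter (g : ℕ) := Fin (2 * g) × Bool

/-- The label of the `p`-th letter of the relator `[a₁,b₁][a₂,b₂]⋯[a_g,b_g]`. -/
def relLabel (g : ℕ) (p : Fin (4 * g)) : Fin (2 * g) :=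
  ⟨2 * ((p : ℕ) / 4) + ((p : ℕ) % 4) % 2, by have := p.2; omega⟩

/-- The sign of the `p`-th letter of the relator. -/
def relSign (g : ℕ) (p : Fin (4 * g)) : Bool := decide ((p : ℕ) % 4 < 2)

/-- The relator `[a₁,b₁][a₂,b₂]⋯[a_g,b_g]` as a word (list of signed letters). -/
def relatorWord (g : ℕ) : List (Letter g) :=
  (List.finRange (4 * g)).map fun p => (relLabel g p, relSign g p)

/-- The relator as an element of the free group on the `2g` generators. -/
def relatorF (g : ℕ) : FreeGroup (Fin (2 * g)) :=
  ((relatorWord g).map fun l => if l.2 then FreeGroup.of l.1 else (FreeGroup.of l.1)⁻¹).prod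

/-- The surface group `Γ_g = ⟨a₁,b₁,…,a_g,b_g ∣ [a₁,b₁]⋯[a_g,b_g]⟩`. -/
abbrev Gamma (g : ℕ) := PresentedGroup ({relatorF g} : Set (FreeGroup (Fin (2 * g))))

/-- The image of a signed letter in `Γ_g`. -/
def letterG {g : ℕ} (l : Letter g) : Gamma g :=
  if l.2 then PresentedGroup.of l.1 else (PresentedGroup.of l.1)⁻¹

/-- The image of a word in `Γ_g`. -/
def wordG {g : ℕ} (w : List (Letter g)) : Gamma g := (w.map letterG).prod

/-- `ℓ(γ^{Γ_g})`: the minimal length of a word in the generators representing the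
conjugacy class of `γ` in `Γ_g`. -/
def conjLen {g : ℕ} (γ : Gamma g) : ℕ :=
  sInf {n | ∃ w : List (Letter g), w.length = n ∧ ∃ x : Gamma g, x * wordG w * x⁻¹ = γ}

/-! ### Half-edge positions around a vertex of `Σ_g`

The `4g` half-edges around the vertex `o` of `Σ_g` come in the (clockwise) cyclic
order `a₁`-out, `b₁`-in, `a₁`-in, `b₁`-out, `a₂`-out, `b₂`-in, `a₂`-in, `b₂`-out, …
-/

/-- Position of the outgoing `ℓ`-labeled half-edge in the cyclic order. -/
def posOut {g : ℕ} (ℓ : Fin (2 * g)) : ℕ :=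
  if (ℓ : ℕ) % 2 = 0 then 2 * (ℓ : ℕ) else 2 * (ℓ : ℕ) + 1

/-- Position of the incoming `ℓ`-labeled half-edge in the cyclic order. -/
def posIn {g : ℕ} (ℓ : Fin (2 * g)) : ℕ :=
  if (ℓ : ℕ) % 2 = 0 then 2 * (ℓ : ℕ) + 2 else 2 * (ℓ : ℕ) - 1

/-- The position of the half-edge through which a traversal of a dart with signed
letter `s` *arrives* at its terminal vertex. -/
def posArr {g : ℕ} (s : Letter g) : ℕ := if s.2 then posIn s.1 else posOut s.1

/-- The position of the half-edge through which a traversal of a dart with signed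
letter `s` *leaves* its initial vertex. -/
def posLv {g : ℕ} (s : Letter g) : ℕ := if s.2 then posOut s.1 else posIn s.1

/-- The number of half-edges strictly between the arrival half-edge of `s` and the
departure half-edge of `t`, in the clockwise cyclic order of the `4g` half-edges
around a vertex. -/
def gapN {g : ℕ} (s t : Letter g) : ℕ := (posLv t + 4 * g - (posArr s + 1)) % (4 * g)

/-! ### Combinatorial complexes -/

/-- A combinatorial at-most-2-dimensional CW-complex with directed edges labeled by
the generators of `Γ_g`, and 2-cells recorded by their boundary walks (lists of
darts, i.e. edges with a direction of traversal). -/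
structure Complex (g : ℕ) where
  V : Type
  E : Type
  F : Type
  src : E → V
  dst : E → V
  lab : E → Fin (2 * g)
  bdry : F → List (E × Bool)

namespace Complex

variable {g : ℕ} (Y : Complex g)

/-- Darts: edges together with a direction of traversal (`true` = forward). -/
abbrev D := Y.E × Bool

/-- The initial vertex of a dart. -/
def dTail (d : Y.D) : Y.V := if d.2 then Y.src d.1 else Y.dst d.1

/-- The terminal vertex of a dart. -/
def dHead (d : Y.D) : Y.V := if d.2 then Y.dst d.1 else Y.src d.1

/-- The reversal of a dart. -/
def dRev (d : Y.D) : Y.D := (d.1, !d.2)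

/-- The signed letter read by a dart. -/
def dLet (d : Y.D) : Letter g := (Y.lab d.1, d.2)

/-- The word read along a list of darts. -/
def wordOf (l : List Y.D) : List (Letter g) := l.map Y.dLet

/-- The reversed walk. -/
def revW (l : List Y.D) : List Y.D := (l.map Y.dRev).reverse

/-- `WalkFrom u v l` : `l` is a walk (edge-path) from `u` to `v`. -/
inductive WalkFrom : Y.V → Y.V → List Y.D → Prop
  | nil (v : Y.V) : WalkFrom v v []
  | cons (d : Y.D) {v : Y.V} {l : List Y.D} :
      WalkFrom (Y.dHead d) v l → WalkFrom (Y.dTail d) v (d :: l)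

/-- All darts of `l` use edges from the set `sE`. -/
def InSet (sE : Set Y.E) (l : List Y.D) : Prop := ∀ d ∈ l, d.1 ∈ sE

/-- Two darts are adjacent (can be traversed consecutively). -/
def adj (d d' : Y.D) : Prop := Y.dHead d = Y.dTail d'

/-- A nonempty closed walk. -/
def IsCycle (c : List Y.D) : Prop := c ≠ [] ∧ ∃ v, Y.WalkFrom v v c

/-- **P1**: at most one incoming and at most one outgoing `ℓ`-labeled edge at every
vertex, for every label `ℓ`. -/
def P1 : Prop :=
  (∀ e e' : Y.E, Y.src e = Y.src e' → Y.lab e = Y.lab e' → e = e') ∧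
  (∀ e e' : Y.E, Y.dst e = Y.dst e' → Y.lab e = Y.lab e' → e = e')

/-- **P2**: every walk reading a word equal to `1` in `Γ_g` is closed. -/
def P2 : Prop :=
  ∀ (u v : Y.V) (l : List Y.D), Y.WalkFrom u v l → wordG (Y.wordOf l) = 1 → u = v

/-- **P3**: every 2-cell is glued along a closed walk reading the relator
`[a₁,b₁]⋯[a_g,b_g]`, and every such closed walk bounds at most one 2-cell. -/
def P3 : Prop :=
  (∀ f : Y.F, (∃ v, Y.WalkFrom v v (Y.bdry f)) ∧ Y.wordOf (Y.bdry f) = relatorWord g) ∧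
  Function.Injective Y.bdry

/-- A combinatorial covering space of `Σ_g`: every vertex has exactly one outgoing
and one incoming edge of each label, every walk reading the relator is closed, and
every closed walk reading the relator bounds exactly one `4g`-gon. -/
def IsCovering : Prop :=
  Y.P1 ∧ Y.P3 ∧
  (∀ (v : Y.V) (ℓ : Fin (2 * g)), ∃ e, Y.src e = v ∧ Y.lab e = ℓ) ∧
  (∀ (v : Y.V) (ℓ : Fin (2 * g)), ∃ e, Y.dst e = v ∧ Y.lab e = ℓ) ∧
  (∀ (u v : Y.V) (l : List Y.D), Y.WalkFrom u v l → Y.wordOf l = relatorWord g → u = v) ∧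
  (∀ (v : Y.V) (l : List Y.D), Y.WalkFrom v v l → Y.wordOf l = relatorWord g →
    ∃ f, Y.bdry f = l)

end Complex

/-- A morphism of labeled complexes: maps cells to cells of the same dimension and
respects sources, targets, labels and face boundaries (equivalently, commutes with
the immersions to `Σ_g`). -/
structure Hom {g : ℕ} (Y Z : Complex g) where
  mV : Y.V → Z.V
  mE : Y.E → Z.E
  mF : Y.F → Z.F
  hsrc : ∀ e, Z.src (mE e) = mV (Y.src e)
  hdst : ∀ e, Z.dst (mE e) = mV (Y.dst e)
  hlab : ∀ e, Z.lab (mE e) = Y.lab e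
  hbdry : ∀ f, Z.bdry (mF f) = (Y.bdry f).map fun d => (mE d.1, d.2)

namespace Hom

variable {g : ℕ} {Y Z : Complex g}

/-- The induced map on darts. -/
def mD (φ : Hom Y Z) (d : Y.D) : Z.D := (φ.mE d.1, d.2)

/-- Injectivity (an embedding of complexes). -/
def Inj (φ : Hom Y Z) : Prop :=
  Function.Injective φ.mV ∧ Function.Injective φ.mE ∧ Function.Injective φ.mF

end Hom

namespace Complex

variable {g : ℕ} (Y : Complex g)

/-- A tiled surface: a complex which embeds into a combinatorial covering space of
`Σ_g` (compatibly with directions and labels). -/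
def IsTiledSurface : Prop :=
  ∃ Z : Complex g, Z.IsCovering ∧ ∃ φ : Hom Y Z, φ.Inj

/-- Connectivity of a complex (any two vertices are joined by a walk). -/
def Connected : Prop := Nonempty Y.V ∧ ∀ v w : Y.V, ∃ l, Y.WalkFrom v w l

/-! ### Blocks and chains -/

/-- A block: a nonempty walk such that successive darts have no half-edges between
them (hence it reads a subword of the cyclic relator, of length at most `4g`). -/
def IsBlock (l : List Y.D) : Prop :=
  l ≠ [] ∧ l.length ≤ 4 * g ∧
  List.Chain' (fun d d' => Y.adj d d' ∧ gapN (Y.dLet d) (Y.dLet d') = 0) l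

/-- Two blocks are consecutive: concatenation is a walk and there is exactly one
half-edge between the last dart of the first and the first dart of the second. -/
def chainStep (b b' : List Y.D) : Prop :=
  ∃ d d', b.getLast? = some d ∧ b'.head? = some d' ∧ Y.adj d d' ∧
    gapN (Y.dLet d) (Y.dLet d') = 1

/-- A chain: a nonempty sequence of consecutive blocks. -/
def IsChain (bs : List (List Y.D)) : Prop :=
  bs ≠ [] ∧ (∀ b ∈ bs, Y.IsBlock b) ∧ List.Chain' Y.chainStep bs

/-- A cyclic chain: a chain whose blocks pave an entire cycle. -/
def IsCyclicChain (bs : List (List Y.D)) : Prop :=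
  Y.IsChain bs ∧ ∃ b b', bs.getLast? = some b ∧ bs.head? = some b' ∧ Y.chainStep b b'

/-- A long chain: a chain of consecutive blocks of lengths `2g, 2g−1, …, 2g−1, 2g`. -/
def IsLongChain (bs : List (List Y.D)) : Prop :=
  Y.IsChain bs ∧ ∃ k, bs.map List.length = 2 * g :: (List.replicate k (2 * g - 1) ++ [2 * g])

/-- A half-chain: a cyclic chain all of whose blocks have length `2g − 1`. -/
def IsHalfChain (bs : List (List Y.D)) : Prop :=
  Y.IsCyclicChain bs ∧ ∀ b ∈ bs, b.length = 2 * g - 1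

/-! ### Boundary cycles of the thick version (relative to sets of present edges and
faces), via the ribbon structure -/

/-- `nextD sE d d'`: among darts (with edge in `sE`) leaving the head of `d`, the
dart `d'` is the first one in clockwise order after the arrival half-edge of `d`.
This is the successor map whose orbits trace the boundary components of the thick
version of the ribbon graph. -/
def nextD (sE : Set Y.E) (d d' : Y.D) : Prop :=
  d'.1 ∈ sE ∧ Y.adj d d' ∧
  ∀ d'' : Y.D, d''.1 ∈ sE → Y.adj d d'' →
    gapN (Y.dLet d) (Y.dLet d') ≤ gapN (Y.dLet d) (Y.dLet d'')

/-- The corner between the consecutive darts `d, d'` is filled by a face from `sF`. -/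
def faceStep (sF : Set Y.F) (d d' : Y.D) : Prop :=
  ∃ f ∈ sF, [d, d'] <:+: (Y.bdry f ++ Y.bdry f)

/-- One step along the boundary of the thick version. -/
def bStep (sE : Set Y.E) (sF : Set Y.F) (d d' : Y.D) : Prop :=
  d.1 ∈ sE ∧ Y.nextD sE d d' ∧ ¬ Y.faceStep sF d d'

/-- A (finite segment of a) boundary cycle of the thick version. -/
def BPath (sE : Set Y.E) (sF : Set Y.F) (l : List Y.D) : Prop :=
  l ≠ [] ∧ Y.InSet sE l ∧ List.Chain' (Y.bStep sE sF) l

/-- A (finite) boundary cycle of the thick version. -/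
def BCycle (sE : Set Y.E) (sF : Set Y.F) (l : List Y.D) : Prop :=
  Y.BPath sE sF l ∧ ∃ d d', l.getLast? = some d ∧ l.head? = some d' ∧ Y.bStep sE sF d d'

/-- A dart lying on the boundary of the thick version. -/
def IsBDart (sE : Set Y.E) (sF : Set Y.F) (d : Y.D) : Prop :=
  d.1 ∈ sE ∧ ∃ d', Y.nextD sE d d' ∧ ¬ Y.faceStep sF d d'

/-- Boundary reduced: no boundary cycle contains a long block (length `≥ 2g+1`) or
a long chain. -/
def BoundaryReduced (sE : Set Y.E) (sF : Set Y.F) : Prop :=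
  (∀ l, Y.BPath sE sF l → ¬ (Y.IsBlock l ∧ 2 * g + 1 ≤ l.length)) ∧
  (∀ bs, Y.IsLongChain bs → ¬ Y.BPath sE sF bs.flatten)

/-- Strongly boundary reduced: no boundary cycle contains a half-block (length
exactly `2g`) or a half-chain. -/
def StronglyBoundaryReduced (sE : Set Y.E) (sF : Set Y.F) : Prop :=
  (∀ l, Y.BPath sE sF l → ¬ (Y.IsBlock l ∧ l.length = 2 * g)) ∧
  (∀ bs, Y.IsHalfChain bs → ¬ Y.BCycle sE sF bs.flatten)

/-! ### Combinatorial homotopy of walks -/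

/-- A closed walk traversing the boundary of a face from `sF` (in either direction,
starting anywhere). -/
def faceLoop (sF : Set Y.F) (b : List Y.D) : Prop :=
  ∃ f ∈ sF, ∃ n, b = (Y.bdry f).rotate n ∨ b = Y.revW ((Y.bdry f).rotate n)

/-- Elementary homotopy move: insertion of a backtrack or of a face boundary. -/
def elemMove (sE : Set Y.E) (sF : Set Y.F) (l l' : List Y.D) : Prop :=
  (∃ (l₁ l₂ : List Y.D) (d : Y.D), d.1 ∈ sE ∧ l = l₁ ++ l₂ ∧ l' = l₁ ++ d :: Y.dRev d :: l₂) ∨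
  (∃ l₁ l₂ b, Y.faceLoop sF b ∧ l = l₁ ++ l₂ ∧ l' = l₁ ++ b ++ l₂)

/-- Homotopy (rel endpoints) of walks from `u` to `v`, inside the subcomplex with
edge set `sE` and face set `sF`. -/
def Homotopic (sE : Set Y.E) (sF : Set Y.F) (u v : Y.V) (c c' : List Y.D) : Prop :=
  Relation.EqvGen
    (fun a b =>
      Y.WalkFrom u v a ∧ Y.WalkFrom u v b ∧ Y.InSet sE a ∧ Y.InSet sE b ∧
        (Y.elemMove sE sF a b ∨ Y.elemMove sE sF b a)) c c'

/-- A closed walk which is null-homotopic. -/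
def NullHomotopic (sE : Set Y.E) (sF : Set Y.F) (c : List Y.D) : Prop :=
  ∃ v, Y.WalkFrom v v c ∧ Y.Homotopic sE sF v v c []

/-- An essential cycle: a nonempty closed walk which is not null-homotopic. -/
def Essential (sE : Set Y.E) (sF : Set Y.F) (c : List Y.D) : Prop :=
  Y.IsCycle c ∧ Y.InSet sE c ∧ ¬ Y.NullHomotopic sE sF c

/-- Free homotopy of closed walks. -/
def FreelyHomotopic (sE : Set Y.E) (sF : Set Y.F) (c c' : List Y.D) : Prop :=
  ∃ u v q, Y.WalkFrom u u c ∧ Y.WalkFrom v v c' ∧ Y.WalkFrom u v q ∧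
    Y.InSet sE q ∧ Y.InSet sE c ∧ Y.InSet sE c' ∧
    Y.Homotopic sE sF u u c (q ++ c' ++ Y.revW q)

/-- `c` is a shortest representative of its free homotopy class. -/
def ShortestRep (sE : Set Y.E) (sF : Set Y.F) (c : List Y.D) : Prop :=
  ∀ c', Y.FreelyHomotopic sE sF c c' → c.length ≤ c'.length

end Complex

/-- `s` occurs as a contiguous subword of the cyclic word `c`. -/
def cycContains {α : Type*} (c s : List α) : Prop :=
  s ≠ [] ∧ s.length ≤ c.length ∧ s <:+: (c ++ c)

namespace Complex

variable {g : ℕ} (Y : Complex g)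

/-- The cycle `c` contains no long block and no long chain. -/
def NoLongBlockOrChainCyc (c : List Y.D) : Prop :=
  (∀ s, cycContains c s → ¬ (Y.IsBlock s ∧ 2 * g + 1 ≤ s.length)) ∧
  (∀ bs, Y.IsLongChain bs → ¬ cycContains c bs.flatten)

/-- A (cyclically) non-backtracking cycle. -/
def NonBacktrackingCyc (c : List Y.D) : Prop :=
  ¬ ∃ d : Y.D, cycContains c [d, Y.dRev d]

/-- A cycle which is essential and a shortest representative of its
free homotopy class. -/
def GoodCycle (c : List Y.D) : Prop :=
  Y.IsCycle c ∧ Y.Essential Set.univ Set.univ c ∧ Y.ShortestRep Set.univ Set.univ c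

/-! ### Cells and components of complements -/

/-- The cells of a complex. -/
def Cell := Y.V ⊕ Y.E ⊕ Y.F

def vCell (v : Y.V) : Y.Cell := Sum.inl v
def eCell (e : Y.E) : Y.Cell := Sum.inr (Sum.inl e)
def fCell (f : Y.F) : Y.Cell := Sum.inr (Sum.inr f)

/-- Basic incidence of (open) cells. -/
def inc0 : Y.Cell → Y.Cell → Prop := fun c c' =>
  match c, c' with
  | Sum.inl v, Sum.inr (Sum.inl e) => Y.src e = v ∨ Y.dst e = v
  | Sum.inl v, Sum.inr (Sum.inr f) => ∃ d ∈ Y.bdry f, Y.dTail d = v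
  | Sum.inr (Sum.inl e), Sum.inr (Sum.inr f) => ∃ b, (e, b) ∈ Y.bdry f
  | _, _ => False

/-- Symmetrized incidence of cells. -/
def incid (c c' : Y.Cell) : Prop := Y.inc0 c c' ∨ Y.inc0 c' c

end Complex

/-- A triple of subsets of the cells of a complex `Y` (a prospective subcomplex). -/
structure SubC {g : ℕ} (Y : Complex g) where
  sV : Set Y.V
  sE : Set Y.E
  sF : Set Y.F

namespace SubC

variable {g : ℕ} {Y : Complex g}

/-- `S` is an actual subcomplex: closed under taking boundaries of cells. -/
def IsSub (S : SubC Y) : Prop :=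
  (∀ e ∈ S.sE, Y.src e ∈ S.sV ∧ Y.dst e ∈ S.sV) ∧
  (∀ f ∈ S.sF, ∀ d ∈ Y.bdry f, d.1 ∈ S.sE)

/-- Containment of subcomplexes. -/
def le (S T : SubC Y) : Prop := S.sV ⊆ T.sV ∧ S.sE ⊆ T.sE ∧ S.sF ⊆ T.sF

/-- Compactness: finitely many cells. -/
def Compact (S : SubC Y) : Prop := S.sV.Finite ∧ S.sE.Finite ∧ S.sF.Finite

/-- Connectivity of the subcomplex. -/
def Connected (S : SubC Y) : Prop :=
  S.sV.Nonempty ∧ ∀ v ∈ S.sV, ∀ w ∈ S.sV, ∃ l, Y.WalkFrom v w l ∧ Y.InSet S.sE l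

/-- Image of a subcomplex under a morphism. -/
def image {Z : Complex g} (φ : Hom Y Z) (S : SubC Y) : SubC Z :=
  ⟨φ.mV '' S.sV, φ.mE '' S.sE, φ.mF '' S.sF⟩

end SubC

/-- The whole complex, as a subcomplex of itself. -/
def fullSub {g : ℕ} (Y : Complex g) : SubC Y := ⟨Set.univ, Set.univ, Set.univ⟩

namespace Complex

variable {g : ℕ} (Y : Complex g)

/-- Membership of a cell in a subcomplex. -/
def inSub (S : SubC Y) : Y.Cell → Prop := fun c =>
  match c with
  | Sum.inl v => v ∈ S.sV
  | Sum.inr (Sum.inl e) => e ∈ S.sE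
  | Sum.inr (Sum.inr f) => f ∈ S.sF

/-- Reachability of cells through the open complement of the subcomplex `S`
(= lying in the same connected component of the complement). -/
def reachS (S : SubC Y) (c c' : Y.Cell) : Prop :=
  Relation.ReflTransGen (fun a b => Y.incid a b ∧ ¬ Y.inSub S a ∧ ¬ Y.inSub S b) c c'

end Complex

/-- The closure (as a subcomplex) of the connected component of the cell `c₀` in the
complement of the subcomplex `S`. -/
def compCl {g : ℕ} (Y : Complex g) (S : SubC Y) (c₀ : Y.Cell) : SubC Y :=
  let cF : Set Y.F := {f | Y.reachS S c₀ (Y.fCell f)}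
  let cE : Set Y.E :=
    {e | Y.reachS S c₀ (Y.eCell e)} ∪ {e | ∃ f ∈ cF, ∃ b, (e, b) ∈ Y.bdry f}
  let cV : Set Y.V :=
    {v | Y.reachS S c₀ (Y.vCell v)} ∪ {v | ∃ e ∈ cE, Y.src e = v ∨ Y.dst e = v}
  ⟨cV, cE, cF⟩

/-- The subcomplex has exactly one boundary cycle (which covers all boundary darts). -/
def OneBdry {g : ℕ} (Y : Complex g) (S : SubC Y) : Prop :=
  ∃ δ, Y.BCycle S.sE S.sF δ ∧ ∀ d, Y.IsBDart S.sE S.sF d → d ∈ δ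

/-- The subcomplex has exactly two (disjoint) boundary cycles, covering all
boundary darts. -/
def TwoBdry {g : ℕ} (Y : Complex g) (S : SubC Y) : Prop :=
  ∃ δ₁ δ₂, Y.BCycle S.sE S.sF δ₁ ∧ Y.BCycle S.sE S.sF δ₂ ∧ δ₁.Disjoint δ₂ ∧
    ∀ d, Y.IsBDart S.sE S.sF d → d ∈ δ₁ ∨ d ∈ δ₂

/-- The boundary-reduced closure of `S` inside `Y`: the intersection of all
intermediate boundary reduced subcomplexes. -/
def BRcl {g : ℕ} (Y : Complex g) (S : SubC Y) : SubC Y where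
  sV := ⋂ T ∈ {T : SubC Y | T.IsSub ∧ S.le T ∧ Y.BoundaryReduced T.sE T.sF}, T.sV
  sE := ⋂ T ∈ {T : SubC Y | T.IsSub ∧ S.le T ∧ Y.BoundaryReduced T.sE T.sF}, T.sE
  sF := ⋂ T ∈ {T : SubC Y | T.IsSub ∧ S.le T ∧ Y.BoundaryReduced T.sE T.sF}, T.sF

/-- The strongly-boundary-reduced closure of `S` inside `Y`. -/
def SBRcl {g : ℕ} (Y : Complex g) (S : SubC Y) : SubC Y where
  sV := ⋂ T ∈ {T : SubC Y | T.IsSub ∧ S.le T ∧ Y.StronglyBoundaryReduced T.sE T.sF}, T.sV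
  sE := ⋂ T ∈ {T : SubC Y | T.IsSub ∧ S.le T ∧ Y.StronglyBoundaryReduced T.sE T.sF}, T.sE
  sF := ⋂ T ∈ {T : SubC Y | T.IsSub ∧ S.le T ∧ Y.StronglyBoundaryReduced T.sE T.sF}, T.sF

/-- An isomorphism between the subcomplex `S` of `Y` and the subcomplex `T` of `Z`. -/
structure SubEquiv {g : ℕ} (Y : Complex g) (S : SubC Y) (Z : Complex g) (T : SubC Z) where
  fV : Y.V → Z.V
  fE : Y.E → Z.E
  fF : Y.F → Z.F
  bijV : Set.BijOn fV S.sV T.sV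
  bijE : Set.BijOn fE S.sE T.sE
  bijF : Set.BijOn fF S.sF T.sF
  hsrc : ∀ e ∈ S.sE, Z.src (fE e) = fV (Y.src e)
  hdst : ∀ e ∈ S.sE, Z.dst (fE e) = fV (Y.dst e)
  hlab : ∀ e ∈ S.sE, Z.lab (fE e) = Y.lab e
  hbdry : ∀ f ∈ S.sF, Z.bdry (fF f) = (Y.bdry f).map fun d => (fE d.1, d.2)

/-- `FunnelComponent Y S c₀`: the connected component of the cell `c₀` in the
complement of the subcomplex `S` is a twice-punctured sphere with one funnel and
one fake-puncture.  Rendered combinatorially: the component contains infinitely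
many `4g`-gons (the funnel); there is a boundary cycle `δ` of `S` adjacent to the
component, it is unique (one fake-puncture), and every closed walk inside the
closure of the component is freely homotopic there to a power of `δ` or of its
inverse (so the closure is a half-open annulus bounded by `δ`). -/
def FunnelComponent {g : ℕ} (Y : Complex g) (S : SubC Y) (c₀ : Y.Cell) : Prop :=
  {f : Y.F | Y.reachS S c₀ (Y.fCell f)}.Infinite ∧
  ∃ δ : List Y.D, Y.BCycle S.sE S.sF δ ∧
    (∃ d ∈ δ, ∃ c', Y.incid (Y.eCell d.1) c' ∧ Y.reachS S c₀ c') ∧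
    (∀ δ', Y.BCycle S.sE S.sF δ' →
      (∃ d ∈ δ', ∃ c', Y.incid (Y.eCell d.1) c' ∧ Y.reachS S c₀ c') →
      ∃ n, δ' = δ.rotate n) ∧
    (∀ (v : Y.V) (l : List Y.D), Y.WalkFrom v v l →
      Y.InSet ({e | Y.reachS S c₀ (Y.eCell e)} ∪ {e | ∃ b, (e, b) ∈ δ}) l →
      ∃ n,
        Y.FreelyHomotopic ({e | Y.reachS S c₀ (Y.eCell e)} ∪ {e | ∃ b, (e, b) ∈ δ})
          {f | Y.reachS S c₀ (Y.fCell f)} l ((List.replicate n δ).flatten) ∨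
        Y.FreelyHomotopic ({e | Y.reachS S c₀ (Y.eCell e)} ∪ {e | ∃ b, (e, b) ∈ δ})
          {f | Y.reachS S c₀ (Y.fCell f)} l ((List.replicate n (Y.revW δ)).flatten))

/-- `Y` contains a funnel: an essential cycle `δ` of `Y` cutting off an infinite
region of `Y` which is attached to the rest of `Y` only along `δ`, contains no
boundary of `Y`, and is a half-open annulus (every loop inside is freely homotopic
to a power of `δ`); i.e. an end of `Y` which is a puncture of the ambient covering. -/
def HasFunnel {g : ℕ} (Y : Complex g) : Prop :=
  ∃ (δ : List Y.D) (sE : Set Y.E) (sF : Set Y.F),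
    Y.IsCycle δ ∧ Y.Essential Set.univ Set.univ δ ∧
    (∀ d ∈ δ, d.1 ∉ sE) ∧ sE.Nonempty ∧ sF.Infinite ∧
    (∀ f ∈ sF, ∀ d ∈ Y.bdry f, d.1 ∈ sE ∨ ∃ b, (d.1, b) ∈ δ) ∧
    (∀ f : Y.F, (∃ d ∈ Y.bdry f, d.1 ∈ sE) → f ∈ sF) ∧
    (∀ d : Y.D, d.1 ∈ sE → ¬ Y.IsBDart Set.univ Set.univ d) ∧
    (∀ v : Y.V, (∃ e ∈ sE, Y.src e = v ∨ Y.dst e = v) → (∀ d ∈ δ, Y.dTail d ≠ v) →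
      ∀ e' : Y.E, (Y.src e' = v ∨ Y.dst e' = v) → e' ∈ sE) ∧
    (∀ (v : Y.V) (l : List Y.D), Y.WalkFrom v v l →
      Y.InSet (sE ∪ {e | ∃ b, (e, b) ∈ δ}) l →
      ∃ n,
        Y.FreelyHomotopic (sE ∪ {e | ∃ b, (e, b) ∈ δ}) sF l
          ((List.replicate n δ).flatten) ∨
        Y.FreelyHomotopic (sE ∪ {e | ∃ b, (e, b) ∈ δ}) sF l
          ((List.replicate n (Y.revW δ)).flatten))

/-- The fundamental group of `Y` is cyclic: some closed walk `c` generates all free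
homotopy classes of loops.  (For a connected surface this is *equivalent to NOT
having genus ≥ 1 or at least 3 boundary components/punctures*.) -/
def CyclicPi1 {g : ℕ} (Y : Complex g) : Prop :=
  ∃ c : List Y.D, ∀ (v : Y.V) (l : List Y.D), Y.WalkFrom v v l →
    ∃ n,
      Y.FreelyHomotopic Set.univ Set.univ l ((List.replicate n c).flatten) ∨
      Y.FreelyHomotopic Set.univ Set.univ l ((List.replicate n (Y.revW c)).flatten)

/-! ### The covering space `J\~Σ_g` and the core surface of `J` -/

/-- Right cosets `Jx` of `J` in `Γ_g` — the vertices (and faces) of `J\~Σ_g`. -/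
abbrev Cos (g : ℕ) (J : Subgroup (Gamma g)) := Quotient (QuotientGroup.rightRel J)

/-- The coset `Jx`. -/
def mkCos (g : ℕ) (J : Subgroup (Gamma g)) (x : Gamma g) : Cos g J :=
  Quotient.mk _ x

/-- Right multiplication on right cosets. -/
def rmul (g : ℕ) (J : Subgroup (Gamma g)) (x : Gamma g) : Cos g J → Cos g J :=
  Quotient.map (· * x) (by
    intro a b hab
    have h1 : b * a⁻¹ ∈ J := QuotientGroup.rightRel_apply.mp hab
    refine QuotientGroup.rightRel_apply.mpr ?_
    have h2 : b * x * (a * x)⁻¹ = b * a⁻¹ := by group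
    rw [h2]; exact h1)

/-- The walk in `J\~Σ_g` starting at a vertex and reading a given word. -/
def relWalk (g : ℕ) (J : Subgroup (Gamma g)) :
    Cos g J → List (Letter g) → List ((Cos g J × Fin (2 * g)) × Bool)
  | _, [] => []
  | v, (ℓ, true) :: w =>
      ((v, ℓ), true) :: relWalk g J (rmul g J (PresentedGroup.of ℓ) v) w
  | v, (ℓ, false) :: w =>
      ((rmul g J (PresentedGroup.of ℓ)⁻¹ v, ℓ), false) ::
        relWalk g J (rmul g J (PresentedGroup.of ℓ)⁻¹ v) w

/-- The covering space `Υ = J\~Σ_g` of `Σ_g` corresponding to the subgroup `J`,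
with the CW-structure pulled back from `Σ_g`: vertices and `4g`-gons are the right
cosets of `J`, and each vertex carries one outgoing edge per label. -/
def cover (g : ℕ) (J : Subgroup (Gamma g)) : Complex g where
  V := Cos g J
  E := Cos g J × Fin (2 * g)
  F := Cos g J
  src e := e.1
  dst e := rmul g J (PresentedGroup.of e.2) e.1
  lab e := e.2
  bdry v := relWalk g J v (relatorWord g)

/-- The map `J₁\~Σ_g → J₂\~Σ_g` on vertices, for `J₁ ≤ J₂`. -/
def coverMapV {g : ℕ} {J₁ J₂ : Subgroup (Gamma g)} (h : J₁ ≤ J₂) :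
    Cos g J₁ → Cos g J₂ :=
  Quotient.map id (by
    intro a b hab
    have h1 : b * a⁻¹ ∈ J₁ := QuotientGroup.rightRel_apply.mp hab
    exact QuotientGroup.rightRel_apply.mpr (h h1))

/-- The natural covering morphism on edges. -/
def coverMapE {g : ℕ} {J₁ J₂ : Subgroup (Gamma g)} (h : J₁ ≤ J₂)
    (e : (cover g J₁).E) : (cover g J₂).E :=
  (coverMapV h e.1, e.2)

/-- The natural covering morphism on darts. -/
def coverMapD {g : ℕ} {J₁ J₂ : Subgroup (Gamma g)} (h : J₁ ≤ J₂)
    (d : (cover g J₁).D) : (cover g J₂).D :=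
  (coverMapE h d.1, d.2)

/-- The cycle `c` in `J\~Σ_g` represents the conjugacy class of `γ` in `J`
(conjugacy classes in `J` ↔ free homotopy classes of essential loops in `J\~Σ_g`). -/
def RepCls {g : ℕ} (J : Subgroup (Gamma g)) (c : List ((cover g J).D))
    (γ : Gamma g) : Prop :=
  ∃ x j : Gamma g, j ∈ J ∧
    (cover g J).WalkFrom (mkCos g J x) (mkCos g J x) c ∧
    x * wordG ((cover g J).wordOf c) * x⁻¹ = j * γ * j⁻¹

/-- Step (i) of the definition of the core surface: the edges lying on some
shortest representative cycle of an essential free homotopy class. -/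
def coreE1 (g : ℕ) (J : Subgroup (Gamma g)) : Set (cover g J).E :=
  {e | ∃ c, (cover g J).GoodCycle c ∧ ∃ b, (e, b) ∈ c}

/-- The vertices of step (i) of the definition of the core surface. -/
def coreV1 (g : ℕ) (J : Subgroup (Gamma g)) : Set (cover g J).V :=
  {v | ∃ e ∈ coreE1 g J, (cover g J).src e = v ∨ (cover g J).dst e = v}

/-- Step (i) of the definition of the core surface, as a subcomplex of `J\~Σ_g`. -/
def coreS1 (g : ℕ) (J : Subgroup (Gamma g)) : SubC (cover g J) :=
  ⟨coreV1 g J, coreE1 g J, ∅⟩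

/-- A cell of `J\~Σ_g` lying in a connected component of the complement of step (i)
which contains only finitely many `4g`-gons. -/
def coreFin (g : ℕ) (J : Subgroup (Gamma g)) (c : (cover g J).Cell) : Prop :=
  ¬ (cover g J).inSub (coreS1 g J) c ∧
  {f : (cover g J).F | (cover g J).reachS (coreS1 g J) c ((cover g J).fCell f)}.Finite

open Classical in
/-- The core surface `Core(J)` of a subgroup `J ≤ Γ_g`, as a subcomplex of
`Υ = J\~Σ_g`: (i) the union of all shortest representative cycles of essential
free homotopy classes in `Υ`, together with (ii) all connected components of the
complement containing finitely many `4g`-gons.  For the trivial subgroup it is a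
single vertex. -/
def coreSub (g : ℕ) (J : Subgroup (Gamma g)) : SubC (cover g J) :=
  if J = ⊥ then ⟨{mkCos g J 1}, ∅, ∅⟩
  else
    ⟨coreV1 g J ∪ {v | coreFin g J ((cover g J).vCell v)},
     coreE1 g J ∪ {e | coreFin g J ((cover g J).eCell e)},
     {f | coreFin g J ((cover g J).fCell f)}⟩

/-! ### Auxiliary lemmas for the proof -/

theorem posArr_lt {g : ℕ} (s : Letter g) : posArr s < 4 * g := by
  obtain ⟨⟨l, hl⟩, b⟩ := s
  cases b <;> simp only [posArr, posIn, posOut] <;> split_ifs <;> simp_all <;> omega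

theorem posLv_lt {g : ℕ} (s : Letter g) : posLv s < 4 * g := by
  obtain ⟨⟨l, hl⟩, b⟩ := s
  cases b <;> simp only [posLv, posIn, posOut] <;> split_ifs <;> simp_all <;> omega

theorem gapN_eq {g : ℕ} (s t : Letter g) : gapN s t =
    if posArr s + 1 ≤ posLv t then posLv t - (posArr s + 1)
    else posLv t + 4 * g - (posArr s + 1) := by
  have h1 := posArr_lt s
  have h2 := posLv_lt t
  unfold gapN
  split_ifs with h
  · rw [Nat.mod_eq_sub_mod (by omega), Nat.mod_eq_of_lt (by omega)]; omega
  · rw [Nat.mod_eq_of_lt (by omega)]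

theorem posLv_inj {g : ℕ} {s t : Letter g} (h : posLv s = posLv t) : s = t := by
  obtain ⟨⟨l, hl⟩, b⟩ := s
  obtain ⟨⟨m, hm⟩, c⟩ := t
  cases b <;> cases c <;> simp only [posLv, posIn, posOut] at h <;>
    simp at h ⊢ <;> split_ifs at h <;> omega

theorem posArr_inj {g : ℕ} {s t : Letter g} (h : posArr s = posArr t) : s = t := by
  obtain ⟨⟨l, hl⟩, b⟩ := s
  obtain ⟨⟨m, hm⟩, c⟩ := t
  cases b <;> cases c <;> simp only [posArr, posIn, posOut] at h <;>
    simp at h ⊢ <;> split_ifs at h <;> omega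

theorem gap_det_next {g : ℕ} {s t t' : Letter g} (h : gapN s t = 0) (h' : gapN s t' = 0) :
    t = t' := by
  apply posLv_inj
  rw [gapN_eq] at h h'
  have h1 := posArr_lt s
  have h2 := posLv_lt t
  have h3 := posLv_lt t'
  split_ifs at h h' <;> omega

theorem gap_det_prev {g : ℕ} {s s' t : Letter g} (h : gapN s t = 0) (h' : gapN s' t = 0) :
    s = s' := by
  apply posArr_inj
  rw [gapN_eq] at h h'
  have h1 := posArr_lt s
  have h2 := posArr_lt s'
  have h3 := posLv_lt t
  split_ifs at h h' <;> omega

theorem posArr_rev {g : ℕ} (l : Fin (2 * g)) (b : Bool) :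
    posArr ((l, !b) : Letter g) = posLv (l, b) := by
  cases b <;> simp [posArr, posLv]

theorem gap_rev {g : ℕ} {s t : Letter g} {l : Fin (2 * g)} {b : Bool}
    (h : gapN s (l, b) = 0) (h' : gapN s t = 1) : gapN (l, !b) t = 0 := by
  rw [gapN_eq] at h h' ⊢
  rw [posArr_rev]
  have h1 := posArr_lt s
  have h2 := posLv_lt ((l, b) : Letter g)
  have h3 := posLv_lt t
  split_ifs at h h' ⊢ <;> omega

/-- The `p`-th relator letter. -/
def relL (g : ℕ) (p : Fin (4 * g)) : Letter g := (relLabel g p, relSign g p)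

theorem relL_inj {g : ℕ} {p q : Fin (4 * g)} (h : relL g p = relL g q) : p = q := by
  obtain ⟨p, hp⟩ := p
  obtain ⟨q, hq⟩ := q
  simp only [relL, relLabel, relSign, Prod.mk.injEq, Fin.mk.injEq, decide_eq_decide] at h ⊢
  omega

theorem relL_gap {g : ℕ} {p q : Fin (4 * g)} (h : (q : ℕ) = ((p : ℕ) + 1) % (4 * g)) :
    gapN (relL g p) (relL g q) = 0 := by
  obtain ⟨p, hp⟩ := p
  obtain ⟨q, hq⟩ := q
  simp only at h
  have hpq : (p + 1 < 4 * g ∧ q = p + 1) ∨ (p + 1 = 4 * g ∧ q = 0) := by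
    rcases Nat.lt_or_ge (p + 1) (4 * g) with h1 | h1
    · left; rw [Nat.mod_eq_of_lt h1] at h; exact ⟨h1, h⟩
    · right; have : p + 1 = 4 * g := by omega
      rw [this, Nat.mod_self] at h; exact ⟨this, h⟩
  clear h
  have hA : posArr (relL g ⟨p, hp⟩) =
      if p % 4 = 3 then p else if p % 4 = 0 then p + 2 else if p % 4 = 1 then p else p - 2 := by
    have h4 : p % 4 = 0 ∨ p % 4 = 1 ∨ p % 4 = 2 ∨ p % 4 = 3 := by omega
    rcases h4 with h4 | h4 | h4 | h4 <;>
      simp [relL, relLabel, relSign, posArr, posIn, posOut, h4] <;> omega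
  have hL : posLv (relL g ⟨q, hq⟩) =
      if q % 4 = 1 then q + 2 else if q % 4 = 3 then q - 2 else q := by
    have h4 : q % 4 = 0 ∨ q % 4 = 1 ∨ q % 4 = 2 ∨ q % 4 = 3 := by omega
    rcases h4 with h4 | h4 | h4 | h4 <;>
      simp [relL, relLabel, relSign, posLv, posIn, posOut, h4] <;> omega
  rw [gapN_eq, hA, hL]
  split_ifs <;> omega

namespace Complex

variable {g : ℕ} {Y : Complex g}

theorem WalkFrom.spec {u v : Y.V} {l : List Y.D} (h : Y.WalkFrom u v l) :
    (∀ i d d', l[i]? = some d → l[i + 1]? = some d' → Y.adj d d') ∧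
    (∀ d, l[0]? = some d → Y.dTail d = u) ∧
    (∀ d, l.getLast? = some d → Y.dHead d = v) ∧ (l = [] → u = v) := by
  induction h with
  | nil v => simp
  | @cons d v l hw ih =>
    obtain ⟨i1, i2, i3, i4⟩ := ih
    refine ⟨?_, ?_, ?_, by simp⟩
    · intro i e e' he he'
      cases i with
      | zero =>
        simp at he he'
        subst he
        exact (i2 e' (by simpa using he')).symm
      | succ i =>
        simp at he he'
        exact i1 i e e' he he'
    · intro e he
      simp at he
      rw [he]
    · intro e he
      cases l with
      | nil =>
        simp at he
        subst he
        exact i4 rfl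
      | cons a l =>
        exact i3 e (by simpa [List.getLast?_cons_cons] using he)

/-- The local structure of a tiled surface. -/
structure Nice (Y : Complex g) : Prop where
  p1 : Y.P1
  inj : Function.Injective Y.bdry
  len : ∀ f, (Y.bdry f).length = 4 * g
  lett : ∀ f i d (h : i < 4 * g), (Y.bdry f)[i]? = some d → Y.dLet d = relL g ⟨i, h⟩
  cyc : ∀ f i d d', (Y.bdry f)[i]? = some d → (Y.bdry f)[(i + 1) % (4 * g)]? = some d' →
    Y.adj d d'

theorem IsCovering.nice (h : Y.IsCovering) : Y.Nice := by
  obtain ⟨hp1, ⟨hf, hinj⟩, -⟩ := h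
  have hlen : ∀ f, (Y.bdry f).length = 4 * g := by
    intro f
    have := congrArg List.length (hf f).2
    simpa [wordOf, relatorWord] using this
  refine ⟨hp1, hinj, hlen, ?_, ?_⟩
  · intro f i d h hd
    have := congrArg (fun l => l[i]?) (hf f).2
    simp only [wordOf, relatorWord, List.getElem?_map, hd] at this
    rw [List.getElem?_eq_getElem (by simpa using h)] at this
    simpa [relL] using this
  · intro f i d d' hd hd'
    obtain ⟨⟨v, hw⟩, -⟩ := hf f
    obtain ⟨h1, h2, h3, -⟩ := hw.spec
    have hi : i < 4 * g := by
      have := (List.getElem?_eq_some_iff.1 hd).1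
      rwa [hlen] at this
    rcases Nat.lt_or_ge (i + 1) (4 * g) with hlt | hge
    · rw [Nat.mod_eq_of_lt hlt] at hd'
      exact h1 i d d' hd hd'
    · have he : i + 1 = 4 * g := by omega
      rw [he, Nat.mod_self] at hd'
      have hl : (Y.bdry f).getLast? = some d := by
        rw [List.getLast?_eq_getElem?, hlen, ← he]
        simpa using hd
      unfold adj
      rw [h2 d' hd', h3 d hl]

end Complex

namespace Hom

variable {g : ℕ} {Y Z : Complex g} (φ : Hom Y Z)

theorem dLet_mD (d : Y.D) : Z.dLet (φ.mD d) = Y.dLet d := by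
  simp [Complex.dLet, mD, φ.hlab]

theorem dHead_mD (d : Y.D) : Z.dHead (φ.mD d) = φ.mV (Y.dHead d) := by
  obtain ⟨e, b⟩ := d
  cases b <;> simp [Complex.dHead, mD, φ.hsrc, φ.hdst]

theorem dTail_mD (d : Y.D) : Z.dTail (φ.mD d) = φ.mV (Y.dTail d) := by
  obtain ⟨e, b⟩ := d
  cases b <;> simp [Complex.dTail, mD, φ.hsrc, φ.hdst]

theorem bdry_mD (f : Y.F) : Z.bdry (φ.mF f) = (Y.bdry f).map φ.mD := φ.hbdry f

theorem adj_mD {d d' : Y.D} (h : Y.adj d d') : Z.adj (φ.mD d) (φ.mD d') := by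
  unfold Complex.adj at *
  rw [dHead_mD, dTail_mD, h]

theorem block_mD {l : List Y.D} (h : Y.IsBlock l) : Z.IsBlock (l.map φ.mD) := by
  obtain ⟨h1, h2, h3⟩ := h
  refine ⟨by simpa using h1, by simpa using h2, ?_⟩
  refine List.isChain_map_of_isChain φ.mD ?_ h3
  rintro a b ⟨ha, hb⟩
  exact ⟨φ.adj_mD ha, by rwa [dLet_mD, dLet_mD]⟩

theorem chainStep_mD {b b' : List Y.D} (h : Y.chainStep b b') :
    Z.chainStep (b.map φ.mD) (b'.map φ.mD) := by
  obtain ⟨d, d', h1, h2, h3, h4⟩ := h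
  refine ⟨φ.mD d, φ.mD d', by simp [h1], by simp [h2], φ.adj_mD h3, ?_⟩
  rwa [dLet_mD, dLet_mD]

end Hom

namespace Complex

variable {g : ℕ} {Y : Complex g}

theorem IsTiledSurface.nice (h : Y.IsTiledSurface) : Y.Nice := by
  obtain ⟨Z, hZ, φ, hV, hE, hF⟩ := h
  have N := hZ.nice
  refine ⟨⟨?_, ?_⟩, ?_, ?_, ?_, ?_⟩
  · intro e e' h1 h2
    exact hE (N.p1.1 _ _ (by rw [φ.hsrc, φ.hsrc, h1]) (by rw [φ.hlab, φ.hlab, h2]))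
  · intro e e' h1 h2
    exact hE (N.p1.2 _ _ (by rw [φ.hdst, φ.hdst, h1]) (by rw [φ.hlab, φ.hlab, h2]))
  · intro f f' hff
    exact hF (N.inj (by rw [φ.hbdry, φ.hbdry, hff]))
  · intro f
    have := N.len (φ.mF f)
    rw [φ.hbdry] at this
    simpa using this
  · intro f i d h hd
    rw [← φ.dLet_mD]
    exact N.lett (φ.mF f) i _ h (by rw [φ.bdry_mD]; simp [hd])
  · intro f i d d' hd hd'
    have := N.cyc (φ.mF f) i (φ.mD d) (φ.mD d') (by rw [φ.bdry_mD]; simp [hd])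
      (by rw [φ.bdry_mD]; simp [hd'])
    unfold adj at *
    rw [φ.dHead_mD, φ.dTail_mD] at this
    exact hV this

theorem P1.tail (h : Y.P1) {d d' : Y.D} (h1 : Y.dTail d = Y.dTail d')
    (h2 : Y.dLet d = Y.dLet d') : d = d' := by
  obtain ⟨e, b⟩ := d
  obtain ⟨e', b'⟩ := d'
  simp only [dLet, Prod.mk.injEq] at h2
  obtain ⟨h2, rfl⟩ := h2
  cases b <;> simp only [dTail, if_true, Bool.false_eq_true, if_false] at h1
  · rw [h.2 e e' h1 h2]
  · rw [h.1 e e' h1 h2]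

theorem P1.head (h : Y.P1) {d d' : Y.D} (h1 : Y.dHead d = Y.dHead d')
    (h2 : Y.dLet d = Y.dLet d') : d = d' := by
  obtain ⟨e, b⟩ := d
  obtain ⟨e', b'⟩ := d'
  simp only [dLet, Prod.mk.injEq] at h2
  obtain ⟨h2, rfl⟩ := h2
  cases b <;> simp only [dHead, if_true, Bool.false_eq_true, if_false] at h1
  · rw [h.1 e e' h1 h2]
  · rw [h.2 e e' h1 h2]

theorem Nice.det_next (N : Y.Nice) {d x y : Y.D} (h1 : Y.adj d x) (h2 : Y.adj d y)
    (h3 : gapN (Y.dLet d) (Y.dLet x) = 0) (h4 : gapN (Y.dLet d) (Y.dLet y) = 0) : x = y :=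
  N.p1.tail (h1.symm.trans h2) (gap_det_next h3 h4)

theorem Nice.det_prev (N : Y.Nice) {d x y : Y.D} (h1 : Y.adj x d) (h2 : Y.adj y d)
    (h3 : gapN (Y.dLet x) (Y.dLet d) = 0) (h4 : gapN (Y.dLet y) (Y.dLet d) = 0) : x = y :=
  N.p1.head (h1.trans h2.symm) (gap_det_prev h3 h4)

theorem Nice.step (N : Y.Nice) (f : Y.F) {i : ℕ} (hi : i < 4 * g) {d d' : Y.D}
    (h : (Y.bdry f)[i]? = some d) (h' : (Y.bdry f)[(i + 1) % (4 * g)]? = some d') :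
    Y.adj d d' ∧ gapN (Y.dLet d) (Y.dLet d') = 0 := by
  refine ⟨N.cyc f i d d' h h', ?_⟩
  have hj : (i + 1) % (4 * g) < 4 * g := Nat.mod_lt _ (by omega)
  rw [N.lett f i d hi h, N.lett f _ d' hj h']
  exact relL_gap rfl

theorem Nice.face_next (N : Y.Nice) {f : Y.F} {d : Y.D} (h : d ∈ Y.bdry f) :
    ∃ d' ∈ Y.bdry f, Y.adj d d' ∧ gapN (Y.dLet d) (Y.dLet d') = 0 ∧
      [d, d'] <:+: Y.bdry f ++ Y.bdry f := by
  obtain ⟨i, hi, hd⟩ := List.getElem_of_mem h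
  have hl := N.len f
  have hi' : i < 4 * g := by omega
  have hj : (i + 1) % (4 * g) < (Y.bdry f).length := by
    rw [hl]; exact Nat.mod_lt _ (by omega)
  have hs := N.step f hi' (d := d) (d' := (Y.bdry f)[(i + 1) % (4 * g)])
    (by rw [List.getElem?_eq_getElem hi, hd]) (List.getElem?_eq_getElem hj)
  refine ⟨_, List.getElem_mem hj, hs.1, hs.2, ?_⟩
  have hk : i + 1 < (Y.bdry f ++ Y.bdry f).length := by simp; omega
  have e1 : (Y.bdry f ++ Y.bdry f)[i] = d := by
    rw [List.getElem_append_left hi, hd]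
  have e2 : (Y.bdry f ++ Y.bdry f)[i + 1] = (Y.bdry f)[(i + 1) % (4 * g)] := by
    rcases Nat.lt_or_ge (i + 1) (4 * g) with hlt | hge
    · rw [List.getElem_append_left (by omega)]
      congr 1
      rw [Nat.mod_eq_of_lt hlt]
    · have he : i + 1 = 4 * g := by omega
      rw [List.getElem_append_right (by omega)]
      congr 1
      rw [he, Nat.mod_self, hl, Nat.sub_self]
  rw [← e2]
  conv_lhs => rw [← e1]
  have : [(Y.bdry f ++ Y.bdry f)[i], (Y.bdry f ++ Y.bdry f)[i + 1]] =
      ((Y.bdry f ++ Y.bdry f).drop i).take 2 := by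
    rw [List.drop_eq_getElem_cons (by omega), List.drop_eq_getElem_cons hk]
    rfl
  rw [this]
  exact (List.take_prefix _ _).isInfix.trans (List.drop_suffix _ _).isInfix

theorem Nice.face_prev (N : Y.Nice) {f : Y.F} {d : Y.D} (h : d ∈ Y.bdry f) :
    ∃ d' ∈ Y.bdry f, Y.adj d' d ∧ gapN (Y.dLet d') (Y.dLet d) = 0 := by
  obtain ⟨i, hi, hd⟩ := List.getElem_of_mem h
  have hl := N.len f
  have hi' : i < 4 * g := by omega
  obtain ⟨j, hj, hji⟩ : ∃ j, j < 4 * g ∧ (j + 1) % (4 * g) = i := by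
    rcases Nat.eq_zero_or_pos i with h0 | h0
    · refine ⟨4 * g - 1, by omega, ?_⟩
      rw [Nat.sub_add_cancel (by omega), Nat.mod_self, h0]
    · refine ⟨i - 1, by omega, ?_⟩
      rw [Nat.sub_add_cancel (by omega), Nat.mod_eq_of_lt hi']
  have hj' : j < (Y.bdry f).length := by omega
  exact ⟨(Y.bdry f)[j], List.getElem_mem hj', N.step f hj (List.getElem?_eq_getElem hj')
    (by rw [hji, List.getElem?_eq_getElem hi, hd])⟩

theorem Nice.face_unique (N : Y.Nice) {f f' : Y.F} {d : Y.D} (h : d ∈ Y.bdry f)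
    (h' : d ∈ Y.bdry f') : f = f' := by
  obtain ⟨i, hi, hd⟩ := List.getElem_of_mem h
  obtain ⟨i', hi', hd'⟩ := List.getElem_of_mem h'
  have hl := N.len f
  have hl' := N.len f'
  have hi4 : i < 4 * g := by omega
  have hi4' : i' < 4 * g := by omega
  have hii : i = i' := by
    have h1 := N.lett f i d hi4 (by rw [List.getElem?_eq_getElem hi, hd])
    have h2 := N.lett f' i' d hi4' (by rw [List.getElem?_eq_getElem hi', hd'])
    simpa using relL_inj (h1.symm.trans h2)
  subst hii
  have key : ∀ k, (Y.bdry f)[(i + k) % (4 * g)]? = (Y.bdry f')[(i + k) % (4 * g)]? := by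
    intro k
    induction k with
    | zero =>
      rw [Nat.add_zero, Nat.mod_eq_of_lt hi4, List.getElem?_eq_getElem hi,
        List.getElem?_eq_getElem hi', hd, hd']
    | succ k ih =>
      have ha : (i + k) % (4 * g) < 4 * g := Nat.mod_lt _ (by omega)
      have hb : (i + (k + 1)) % (4 * g) < 4 * g := Nat.mod_lt _ (by omega)
      have hm : ((i + k) % (4 * g) + 1) % (4 * g) = (i + (k + 1)) % (4 * g) := by
        rw [Nat.mod_add_mod, Nat.add_assoc]
      have ha1 := List.getElem?_eq_getElem (l := Y.bdry f) (i := (i + k) % (4 * g)) (by omega)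
      have hb1 := List.getElem?_eq_getElem (l := Y.bdry f) (i := (i + (k + 1)) % (4 * g))
        (by omega)
      have hb2 := List.getElem?_eq_getElem (l := Y.bdry f') (i := (i + (k + 1)) % (4 * g))
        (by omega)
      have s1 := N.step f ha ha1 (by rw [hm]; exact hb1)
      have s2 := N.step f' ha (ih.symm.trans ha1) (by rw [hm]; exact hb2)
      rw [hb1, hb2, N.det_next s1.1 s2.1 s1.2 s2.2]
  apply N.inj
  apply List.ext_getElem?
  intro j
  rcases Nat.lt_or_ge j (4 * g) with hj | hj
  · have := key (j + 4 * g - i)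
    rwa [show i + (j + 4 * g - i) = j + 4 * g by omega, Nat.add_mod_right,
      Nat.mod_eq_of_lt hj] at this
  · rw [List.getElem?_eq_none (by omega), List.getElem?_eq_none (by omega)]

/-- The dart `d` has a face on its side. -/
def hasFace (Y : Complex g) (d : Y.D) : Prop := ∃ f, d ∈ Y.bdry f

theorem faceStep.mem {sF : Set Y.F} {d d' : Y.D} (h : Y.faceStep sF d d') :
    ∃ f ∈ sF, d ∈ Y.bdry f := by
  obtain ⟨f, hf, hi⟩ := h
  refine ⟨f, hf, ?_⟩
  have := hi.subset (List.mem_cons_self)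
  simpa using this

theorem Nice.hasFace_iff (N : Y.Nice) {d d' : Y.D} (h : Y.adj d d')
    (h0 : gapN (Y.dLet d) (Y.dLet d') = 0) : Y.hasFace d ↔ Y.hasFace d' := by
  constructor
  · rintro ⟨f, hf⟩
    obtain ⟨x, hx, ha, hg, -⟩ := N.face_next hf
    exact ⟨f, N.det_next ha h hg h0 ▸ hx⟩
  · rintro ⟨f, hf⟩
    obtain ⟨x, hx, ha, hg⟩ := N.face_prev hf
    exact ⟨f, N.det_prev ha h hg h0 ▸ hx⟩

end Complex

theorem chain_iff_all {α : Type*} {P : α → Prop} {l : List α}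
    (h : List.IsChain (fun a b => P a ↔ P b) l) {a b : α} (ha : a ∈ l) (hb : b ∈ l)
    (hP : P a) : P b := by
  have key : ∀ (l : List α), List.IsChain (fun a b => P a ↔ P b) l →
      ∀ x ∈ l, ∀ y ∈ l.head?, (P x ↔ P y) := by
    intro l
    induction l with
    | nil => simp
    | cons c l ih =>
      intro h x hx y hy
      simp at hy
      subst hy
      rcases List.mem_cons.1 hx with rfl | hx
      · rfl
      · cases l with
        | nil => simp at hx
        | cons e l =>
          rw [List.isChain_cons_cons] at h
          rw [ih h.2 x hx e (by simp), h.1]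
  cases l with
  | nil => simp at ha
  | cons c l =>
    exact (key _ h b hb c (by simp)).2 ((key _ h a ha c (by simp)).1 hP)

theorem chain_imp_last {α : Type*} {P : α → Prop} {l : List α}
    (h : List.IsChain (fun a b => P a → P b) l) {a b : α} (ha : a ∈ l)
    (hb : l.getLast? = some b) (hP : P a) : P b := by
  induction l generalizing a with
  | nil => simp at ha
  | cons c l ih =>
    cases l with
    | nil => simp at ha hb; subst ha; subst hb; exact hP
    | cons e l =>
      rw [List.isChain_cons_cons] at h
      rw [List.getLast?_cons_cons] at hb
      rcases List.mem_cons.1 ha with rfl | ha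
      · exact ih h.2 (a := e) (by simp) hb (h.1 hP)
      · exact ih h.2 ha hb hP

theorem chain_imp_head {α : Type*} {P : α → Prop} {l : List α}
    (h : List.IsChain (fun a b => P a → P b) l) {a b : α} (ha : l.head? = some a)
    (hb : b ∈ l) (hP : P a) : P b := by
  induction l generalizing a with
  | nil => simp at hb
  | cons c l ih =>
    simp at ha
    subst ha
    rcases List.mem_cons.1 hb with rfl | hb
    · exact hP
    · cases l with
      | nil => simp at hb
      | cons e l =>
        rw [List.isChain_cons_cons] at h
        exact ih h.2 (a := e) (by simp) hb (h.1 hP)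

namespace Complex

variable {g : ℕ} {Y : Complex g}

theorem Nice.block_all (N : Y.Nice) {l : List Y.D} (h : Y.IsBlock l) {d d' : Y.D}
    (hd : d ∈ l) (hd' : d' ∈ l) (hf : Y.hasFace d) : Y.hasFace d' := by
  have hc : List.IsChain (fun a b => Y.hasFace a ↔ Y.hasFace b) l := by
    have h3 : List.IsChain (fun d d' => Y.adj d d' ∧ gapN (Y.dLet d) (Y.dLet d') = 0) l := h.2.2
    exact h3.imp fun a b hab => N.hasFace_iff hab.1 hab.2
  exact chain_iff_all hc hd hd' hf

theorem bStep_univ_of_gap {d d' : Y.D} (ha : Y.adj d d')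
    (hg : gapN (Y.dLet d) (Y.dLet d') = 0) (hn : ¬ Y.hasFace d) :
    Y.bStep Set.univ Set.univ d d' := by
  refine ⟨trivial, ⟨trivial, ha, fun d'' _ _ => by omega⟩, fun hf => hn ?_⟩
  obtain ⟨f, -, hf⟩ := hf.mem
  exact ⟨f, hf⟩

/-- In a strongly boundary reduced tiled surface every half-block runs along a face. -/
theorem Nice.halfBlock_face (N : Y.Nice) (hs : Y.StronglyBoundaryReduced Set.univ Set.univ)
    {l : List Y.D} (h : Y.IsBlock l) (hl : l.length = 2 * g) : ∀ d ∈ l, Y.hasFace d := by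
  intro d hd
  by_contra hn
  have hnone : ∀ x ∈ l, ¬ Y.hasFace x := fun x hx hf => hn (N.block_all h hx hd hf)
  refine hs.1 l ⟨h.1, fun _ _ => trivial, ?_⟩ ⟨h, hl⟩
  have h3 : List.IsChain (fun d d' => Y.adj d d' ∧ gapN (Y.dLet d) (Y.dLet d') = 0) l := h.2.2
  exact h3.imp_of_mem_imp fun a b ha _ hab => bStep_univ_of_gap hab.1 hab.2 (hnone a ha)

/-- A boundary step of the preimage along a face maps to a boundary step. -/
theorem bStep_transfer {Z₁ Z₂ : Complex g} (N₁ : Z₁.Nice) (N₂ : Z₂.Nice) (φ : Hom Z₁ Z₂)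
    (T : SubC Z₂) (hT : T.IsSub) {d d' : Z₁.D}
    (h : Z₁.bStep (φ.mE ⁻¹' T.sE) (φ.mF ⁻¹' T.sF) d d') (hf : Z₁.hasFace d)
    (hg : gapN (Z₁.dLet d) (Z₁.dLet d') ≤ 1) :
    Z₂.bStep T.sE T.sF (φ.mD d) (φ.mD d') := by
  obtain ⟨hd, ⟨hd', ha, hmin⟩, hnf⟩ := h
  obtain ⟨f, hf⟩ := hf
  obtain ⟨x, hx, hax, hgx, hinf⟩ := N₁.face_next hf
  have hfm : ∀ y ∈ Z₁.bdry f, φ.mD y ∈ Z₂.bdry (φ.mF f) := by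
    intro y hy
    rw [φ.bdry_mD]
    exact List.mem_map_of_mem hy
  refine ⟨hd, ⟨hd', φ.adj_mD ha, ?_⟩, ?_⟩
  · intro y hy hay
    by_contra hlt
    rw [φ.dLet_mD, φ.dLet_mD] at hlt
    have hgy : gapN (Z₁.dLet d) (Z₂.dLet y) = 0 := by omega
    have hyx : φ.mD x = y := N₂.det_next (φ.adj_mD hax) hay
      (by rw [φ.dLet_mD, φ.dLet_mD]; exact hgx) (by rw [φ.dLet_mD]; exact hgy)
    have hxT : x.1 ∈ φ.mE ⁻¹' T.sE := by
      rw [← hyx] at hy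
      exact hy
    have := hmin x hxT hax
    omega
  · intro hfs
    obtain ⟨f₂, hf₂, hm⟩ := hfs.mem
    have he : f₂ = φ.mF f := N₂.face_unique hm (hfm d hf)
    subst he
    have hxT : x.1 ∈ φ.mE ⁻¹' T.sE := hT.2 _ hf₂ _ (hfm x hx)
    have := hmin x hxT hax
    have hdx : x = d' := N₁.det_next hax ha hgx (by omega)
    subst hdx
    exact hnf ⟨f, hf₂, hinf⟩

theorem preimage_halfBlock {Z₁ Z₂ : Complex g} (N₁ : Z₁.Nice) (N₂ : Z₂.Nice)
    (hs : Z₁.StronglyBoundaryReduced Set.univ Set.univ) (φ : Hom Z₁ Z₂)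
    (T : SubC Z₂) (hT : T.IsSub) (hTs : Z₂.StronglyBoundaryReduced T.sE T.sF)
    (l : List Z₁.D) (hl : Z₁.BPath (φ.mE ⁻¹' T.sE) (φ.mF ⁻¹' T.sF) l) :
    ¬ (Z₁.IsBlock l ∧ l.length = 2 * g) := by
  rintro ⟨hb, hlen⟩
  obtain ⟨h1, h2, h3⟩ := hl
  refine hTs.1 (l.map φ.mD) ⟨by simpa using h1, ?_, ?_⟩ ⟨φ.block_mD hb, by simpa using hlen⟩
  · intro d hd
    obtain ⟨x, hx, rfl⟩ := List.mem_map.1 hd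
    exact h2 x hx
  · have hface := N₁.halfBlock_face hs hb hlen
    have h3' : List.IsChain (Z₁.bStep (φ.mE ⁻¹' T.sE) (φ.mF ⁻¹' T.sF)) l := h3
    have h4 : List.IsChain (fun d d' => Z₁.adj d d' ∧ gapN (Z₁.dLet d) (Z₁.dLet d') = 0) l :=
      hb.2.2
    change List.IsChain _ _
    rw [List.isChain_map]
    rw [List.isChain_iff_getElem] at *
    intro i hi
    exact bStep_transfer N₁ N₂ φ T hT (h3' i hi) (hface _ (List.getElem_mem _))
      (by have := (h4 i hi).2; omega)

/-- Faces propagate from a block of length `2g - 1` to the next one. -/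
theorem Nice.chain_prop (N : Y.Nice) (hg : 2 ≤ g)
    (hs : Y.StronglyBoundaryReduced Set.univ Set.univ)
    {b b' : List Y.D} (hb : Y.IsBlock b) (hb' : Y.IsBlock b')
    (hl' : b'.length = 2 * g - 1) (hst : Y.chainStep b b')
    (h : ∀ d ∈ b, Y.hasFace d) : ∀ d ∈ b', Y.hasFace d := by
  obtain ⟨d, d', h1, h2, h3, h4⟩ := hst
  obtain ⟨f, hf⟩ := h d (List.mem_of_getLast? h1)
  obtain ⟨e, -, hae, hge, -⟩ := N.face_next hf
  have hblk : Y.IsBlock (Y.dRev e :: b') := by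
    refine ⟨by simp, by simp; omega, ?_⟩
    change List.IsChain _ _
    rw [List.isChain_cons]
    refine ⟨?_, hb'.2.2⟩
    intro y hy
    rw [h2] at hy
    simp at hy
    subst hy
    refine ⟨?_, ?_⟩
    · unfold adj at *
      rw [← h3, hae]
      obtain ⟨e, b⟩ := e
      cases b <;> simp [dHead, dTail, dRev]
    · exact gap_rev (s := Y.dLet d) (b := e.2) hge h4
  intro x hx
  exact N.halfBlock_face hs hblk (by simp; omega) x (by simp [hx])

theorem Nice.gap_edge (N : Y.Nice) (hg : 2 ≤ g)
    (hs : Y.StronglyBoundaryReduced Set.univ Set.univ)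
    {b : List Y.D} (hb : Y.IsBlock b) (hl : b.length = 2 * g - 1) {d e : Y.D}
    (hd : b.getLast? = some d) (ha : Y.adj d e) (h0 : gapN (Y.dLet d) (Y.dLet e) = 0) :
    Y.hasFace d := by
  have hblk : Y.IsBlock (b ++ [e]) := by
    refine ⟨by simp, by simp; omega, ?_⟩
    change List.IsChain _ _
    rw [List.isChain_append]
    refine ⟨hb.2.2, by simp, ?_⟩
    intro x hx y hy
    rw [hd] at hx
    simp at hx hy
    subst hx
    subst hy
    exact ⟨ha, h0⟩
  exact N.halfBlock_face hs hblk (by simp; omega) d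
    (by simp [List.mem_of_getLast? hd])

theorem flatten_head {α : Type*} {bs : List (List α)} {b : List α} {d : α}
    (h : bs.head? = some b) (hd : b.head? = some d) : bs.flatten.head? = some d := by
  cases bs with
  | nil => simp at h
  | cons c bs =>
    simp at h
    subst h
    cases c with
    | nil => simp at hd
    | cons x c => simpa using hd

theorem flatten_last {α : Type*} {bs : List (List α)} {b : List α} {d : α}
    (h : bs.getLast? = some b) (hd : b.getLast? = some d) : bs.flatten.getLast? = some d := by
  obtain ⟨bs', rfl⟩ := List.getLast?_eq_some_iff.1 h
  simp [List.getLast?_append, hd]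

theorem preimage_halfChain {Z₁ Z₂ : Complex g} (hg : 2 ≤ g) (N₁ : Z₁.Nice) (N₂ : Z₂.Nice)
    (hs : Z₁.StronglyBoundaryReduced Set.univ Set.univ) (φ : Hom Z₁ Z₂)
    (T : SubC Z₂) (hT : T.IsSub) (hTs : Z₂.StronglyBoundaryReduced T.sE T.sF)
    (bs : List (List Z₁.D)) (hbs : Z₁.IsHalfChain bs) :
    ¬ Z₁.BCycle (φ.mE ⁻¹' T.sE) (φ.mF ⁻¹' T.sF) bs.flatten := by
  rintro ⟨⟨hne, hin, hch⟩, p, q, hp, hq, hpq⟩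
  have hbs0 := hbs
  obtain ⟨⟨⟨hbne, hblk, hstep⟩, bl, bh, hbl, hbh, hcyc⟩, hlen⟩ := hbs
  replace hstep : List.IsChain Z₁.chainStep bs := hstep
  replace hch : List.IsChain (Z₁.bStep (φ.mE ⁻¹' T.sE) (φ.mF ⁻¹' T.sF)) bs.flatten := hch
  have hnil : [] ∉ bs := fun h => (hblk _ h).1 rfl
  have hblm : bl ∈ bs := List.mem_of_getLast? hbl
  have hbhm : bh ∈ bs := List.mem_of_head? hbh
  have hcyc0 := hcyc
  obtain ⟨dl, dh, hdl, hdh, hadj, hgap⟩ := hcyc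
  have hL : bs.flatten.getLast? = some dl := flatten_last hbl hdl
  have hH : bs.flatten.head? = some dh := flatten_head hbh hdh
  have hpd : p = dl := by rw [hL] at hp; simpa using hp.symm
  have hqd : q = dh := by rw [hH] at hq; simpa using hq.symm
  subst hpd
  subst hqd
  by_cases hex : ∃ d ∈ bs.flatten, Z₁.hasFace d
  · -- every dart runs along a face
    have hprop : List.IsChain (fun b b' => (∀ d ∈ b, Z₁.hasFace d) → (∀ d ∈ b', Z₁.hasFace d))
        bs := hstep.imp_of_mem_imp fun b b' hb hb' hbb' =>
      N₁.chain_prop hg hs (hblk b hb) (hblk b' hb') (hlen b' hb') hbb'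
    obtain ⟨d₀, hd₀, hf₀⟩ := hex
    obtain ⟨b₀, hb₀, hdb₀⟩ := List.mem_flatten.1 hd₀
    have hP₀ : ∀ d ∈ b₀, Z₁.hasFace d := fun d hd => N₁.block_all (hblk b₀ hb₀) hdb₀ hd hf₀
    have hPl := chain_imp_last hprop hb₀ hbl hP₀
    have hPh := N₁.chain_prop hg hs (hblk bl hblm) (hblk bh hbhm) (hlen bh hbhm) hcyc0 hPl
    have hall : ∀ d ∈ bs.flatten, Z₁.hasFace d := by
      intro d hd
      obtain ⟨b, hb, hdb⟩ := List.mem_flatten.1 hd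
      exact chain_imp_head hprop hbh hb hPh d hdb
    have hgaps : List.IsChain (fun d d' => gapN (Z₁.dLet d) (Z₁.dLet d') ≤ 1) bs.flatten := by
      rw [List.isChain_flatten hnil]
      refine ⟨?_, ?_⟩
      · intro b hb
        have h3 : List.IsChain (fun d d' => Z₁.adj d d' ∧ gapN (Z₁.dLet d) (Z₁.dLet d') = 0) b :=
          (hblk b hb).2.2
        exact h3.imp fun x y hxy => by have := hxy.2; omega
      · refine hstep.imp ?_
        rintro b b' ⟨x, y, hx, hy, -, hxy⟩ x' hx' y' hy'
        rw [hx] at hx'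
        rw [hy] at hy'
        simp at hx' hy'
        subst hx'
        subst hy'
        omega
    refine hTs.2 (bs.map (List.map φ.mD)) ?_ ?_
    · refine ⟨⟨⟨by simpa using hbne, ?_, ?_⟩, bl.map φ.mD, bh.map φ.mD, by simp [hbl],
        by simp [hbh], φ.chainStep_mD hcyc0⟩, ?_⟩
      · intro b hb
        obtain ⟨b', hb', rfl⟩ := List.mem_map.1 hb
        exact φ.block_mD (hblk b' hb')
      · exact List.isChain_map_of_isChain _ (fun a b hab => φ.chainStep_mD hab) hstep
      · intro b hb
        obtain ⟨b', hb', rfl⟩ := List.mem_map.1 hb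
        simpa using hlen b' hb'
    · rw [← List.map_flatten]
      refine ⟨⟨by simpa using hne, ?_, ?_⟩, φ.mD p, φ.mD q, by rw [List.getLast?_map, hL]; rfl,
        by rw [List.head?_map, hH]; rfl, ?_⟩
      · intro d hd
        obtain ⟨x, hx, rfl⟩ := List.mem_map.1 hd
        exact hin x hx
      · change List.IsChain _ _
        rw [List.isChain_map]
        rw [List.isChain_iff_getElem] at hch hgaps ⊢
        intro i hi
        exact bStep_transfer N₁ N₂ φ T hT (hch i hi) (hall _ (List.getElem_mem _)) (hgaps i hi)
      · exact bStep_transfer N₁ N₂ φ T hT hpq (hall p (List.mem_of_getLast? hL)) (by omega)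
  · -- no dart runs along a face
    have hnone : ∀ d ∈ bs.flatten, ¬ Z₁.hasFace d := fun d hd hf => hex ⟨d, hd, hf⟩
    have hjump : ∀ b ∈ bs, ∀ x y, b.getLast? = some x → Z₁.adj x y →
        gapN (Z₁.dLet x) (Z₁.dLet y) = 1 → Z₁.bStep Set.univ Set.univ x y := by
      intro b hb x y hx ha h1
      have hnx : ¬ Z₁.hasFace x :=
        hnone x (List.mem_flatten.2 ⟨b, hb, List.mem_of_getLast? hx⟩)
      refine ⟨trivial, ⟨trivial, ha, ?_⟩, ?_⟩
      · intro z _ hz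
        by_contra hlt
        exact hnx (N₁.gap_edge hg hs (hblk b hb) (hlen b hb) hx hz (by omega))
      · intro hf
        obtain ⟨f, -, hf⟩ := hf.mem
        exact hnx ⟨f, hf⟩
    refine hs.2 bs hbs0 ⟨⟨hne, fun _ _ => trivial, ?_⟩, p, q, hL, hH,
      hjump bl hblm p q hdl hadj hgap⟩
    change List.IsChain _ _
    rw [List.isChain_flatten hnil]
    refine ⟨?_, ?_⟩
    · intro b hb
      have h3 : List.IsChain (fun d d' => Z₁.adj d d' ∧ gapN (Z₁.dLet d) (Z₁.dLet d') = 0) b :=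
        (hblk b hb).2.2
      exact h3.imp_of_mem_imp fun x y hx _ hxy =>
        bStep_univ_of_gap hxy.1 hxy.2 (hnone x (List.mem_flatten.2 ⟨b, hb, hx⟩))
    · refine hstep.imp_of_mem_imp ?_
      rintro b b' hb - ⟨x, y, hx, hy, ha, hxy⟩ x' hx' y' hy'
      rw [hx] at hx'
      rw [hy] at hy'
      simp at hx' hy'
      subst hx'
      subst hy'
      exact hjump b hb x y hx ha hxy

end Complex

/-- Let `f = φ : Z₁ → Z₂` be a morphism between two strongly
boundary reduced tiled surfaces and `Y` (= `S`) a sub-tiled-surface of `Z₁`.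
Then `f(SBR(Y ↪ Z₁)) ⊆ SBR(f(Y) ↪ Z₂)`. -/
theorem statement_5 (g : ℕ) (hg : 2 ≤ g) (Z₁ Z₂ : Complex g)
    (h₁ : Z₁.IsTiledSurface) (h₂ : Z₂.IsTiledSurface)
    (hs₁ : Z₁.StronglyBoundaryReduced Set.univ Set.univ)
    (hs₂ : Z₂.StronglyBoundaryReduced Set.univ Set.univ)
    (φ : Hom Z₁ Z₂) (S : SubC Z₁) (hS : S.IsSub) :
    (SubC.image φ (SBRcl Z₁ S)).le (SBRcl Z₂ (SubC.image φ S)) := by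
  have N₁ := h₁.nice
  have N₂ := h₂.nice
  have key : ∀ T : SubC Z₂, T.IsSub ∧ (SubC.image φ S).le T ∧
      Z₂.StronglyBoundaryReduced T.sE T.sF →
      (⟨φ.mV ⁻¹' T.sV, φ.mE ⁻¹' T.sE, φ.mF ⁻¹' T.sF⟩ : SubC Z₁) ∈
        {T : SubC Z₁ | T.IsSub ∧ S.le T ∧ Z₁.StronglyBoundaryReduced T.sE T.sF} := by
    rintro T ⟨hT, ⟨l1, l2, l3⟩, hTs⟩
    refine ⟨⟨?_, ?_⟩, ⟨?_, ?_, ?_⟩, ?_, ?_⟩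
    · intro e he
      have := hT.1 _ he
      rw [φ.hsrc, φ.hdst] at this
      exact this
    · intro f hf d hd
      refine hT.2 _ hf (φ.mD d) ?_
      rw [φ.bdry_mD]
      exact List.mem_map_of_mem hd
    · exact fun v hv => l1 ⟨v, hv, rfl⟩
    · exact fun v hv => l2 ⟨v, hv, rfl⟩
    · exact fun v hv => l3 ⟨v, hv, rfl⟩
    · exact Complex.preimage_halfBlock N₁ N₂ hs₁ φ T hT hTs
    · exact Complex.preimage_halfChain hg N₁ N₂ hs₁ φ T hT hTs
  refine ⟨?_, ?_, ?_⟩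
  · rintro _ ⟨v, hv, rfl⟩
    refine Set.mem_iInter₂.2 fun T hT => ?_
    exact Set.mem_iInter₂.1 hv _ (key T hT)
  · rintro _ ⟨v, hv, rfl⟩
    refine Set.mem_iInter₂.2 fun T hT => ?_
    exact Set.mem_iInter₂.1 hv _ (key T hT)
  · rintro _ ⟨v, hv, rfl⟩
    refine Set.mem_iInter₂.2 fun T hT => ?_
    exact Set.mem_iInter₂.1 hv _ (key T hT)

end CS

end
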